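/- Let d ≥ 1, let C ⊆ ℝ^d be compact and convex, and let B ⊆ C be compact with positive Lebesgue measure. Suppose B has maximum measure among all its affine images contained in C, i.e., for every d×d real matrix M and every a ∈ ℝ^d with M(B) + a ⊆ C one has |det M| ≤ 1. Then there exist an integer n with d+1 ≤ n ≤ d(d+1), points u_1, …, u_n ∈ B ∩ bd C, vectors v_1, …, v_n with v_k ∈ N_C(u_k) for each k, and real numbers λ_1, …, λ_n > 0 such that the identity matrix satisfies I = Σ_{k=1}^n λ_k u_k⊗v_k and 0 = Σ_{k=1}^n λ_k v_k. -/

import Mathlib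

open RealInnerProductSpace MeasureTheory

/-!
The claim is that `(I, 0)` lies in the cone generated by the pairs `(u ⊗ v, v)` with `u ∈ B` and
`v ∈ N_C(u)`, `v ≠ 0`; such `u` automatically lie on the boundary of `C`
(`mem_frontier_of_normal`).

Fix `c` in the interior of `C`, which is nonempty since `C` has positive measure. The functional
`φ (A, a) = tr A - ⟪c, a⟫` takes the value `⟪v, u - c⟫` on `(u ⊗ v, v)`, which is at least a
positive multiple of `‖v‖`, and the value `d` on `(I, 0)`. Scaling the normals so that `φ = d`, the
claim becomes membership of `(I, 0)` in the convex hull of a compact set `K` in the hyperplane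
`φ = d`. This hull is compact, so if `(I, 0)` were outside it, Hahn–Banach would give `H` and `b`
with `tr H > 0` and `⟪v, H u + b⟫ < 0` for all contact pairs (`exists_field_of_functional`). Then
for small `ε > 0` the map `x ↦ (I + ε H) x + ε b` sends `B` into `C` (`eventually_move_mem`) and has
determinant `1 + ε tr H + O(ε²) > 1` (`eventually_one_lt_det`), against maximality.

Carathéodory's theorem inside the hyperplane `φ = d` of a space of dimension `d (d + 1)` gives the
upper bound on the number of points (`card_le_finrank_of_hyperplane`). The lower bound holds because
the `v k` span `ℝ^d` and are linearly dependent (`succ_le_card_of_decomposition`).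
-/

/-! ### Moving `B` along an inward field -/

open Filter Topology in
/-- The first-order perturbation step: if the continuous field `w` points strictly inward at every
contact point of `B` with the boundary of `C`, then moving `B` along `w` for a short time keeps it
inside `C`. Otherwise points `x n ∈ B` leave `C` at times `ε n → 0`; unit vectors separating the
moved points from `C` accumulate at a normal `v` at some `x ∈ B` with `0 ≤ ⟪v, w x⟫`. -/
theorem eventually_move_mem {E : Type*} [NormedAddCommGroup E] [InnerProductSpace ℝ E]
    [FiniteDimensional ℝ E] {C B : Set E} (hC : IsClosed C) (hconv : Convex ℝ C)
    (hBC : B ⊆ C) (hB : IsCompact B) {w : E → E} (hw : Continuous w)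
    (hin : ∀ u ∈ B, ∀ v : E, v ≠ 0 → (∀ x ∈ C, ⟪v, x - u⟫ ≤ 0) → ⟪v, w u⟫ < 0) :
    ∀ᶠ ε in 𝓝[>] (0 : ℝ), ∀ x ∈ B, x + ε • w x ∈ C := by
  by_contra hcon
  obtain ⟨ε, hε, hεB⟩ := exists_seq_forall_of_frequently (not_eventually.1 hcon |>.and_eventually
    self_mem_nhdsWithin)
  have hsep : ∀ n, ∃ x ∈ B, ∃ v ∈ Metric.sphere (0 : E) 1,
      ∀ z ∈ C, ⟪v, z⟫ < ⟪v, x⟫ + ε n * ⟪v, w x⟫ := by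
    intro n
    obtain ⟨hn, -⟩ := hεB n
    push Not at hn
    obtain ⟨x, hx, hxC⟩ := hn
    obtain ⟨f, s, hf, hs⟩ := geometric_hahn_banach_closed_point hconv hC hxC
    set v := (InnerProductSpace.toDual ℝ E).symm f with hv
    have hfv : ∀ y, f y = ⟪v, y⟫ := fun y => by simp [hv]
    have hv0 : v ≠ 0 := by
      intro h0
      have h1 := hf x (hBC hx)
      simp only [hfv, h0, inner_zero_left] at h1 hs
      linarith
    have hpos : 0 < ‖v‖ := norm_pos_iff.2 hv0
    refine ⟨x, hx, ‖v‖⁻¹ • v, by simp [norm_smul, hpos.ne'], fun z hz => ?_⟩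
    have h1 := (hf z hz).trans hs
    rw [hfv, hfv, inner_add_right, inner_smul_right] at h1
    simp only [inner_smul_left, RCLike.conj_to_real]
    have := mul_lt_mul_of_pos_left h1 (inv_pos.2 hpos)
    linarith
  choose x hx v hv hsep using hsep
  obtain ⟨⟨x₀, v₀⟩, ⟨hx₀, hv₀⟩, φ, hφ, hlim⟩ :=
    (hB.prod (isCompact_sphere (0 : E) 1)).tendsto_subseq (x := fun n => (x n, v n))
      (fun n => ⟨hx n, hv n⟩)
  have hxl : Tendsto (fun n => x (φ n)) atTop (𝓝 x₀) := (continuous_fst.tendsto _).comp hlim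
  have hvl : Tendsto (fun n => v (φ n)) atTop (𝓝 v₀) := (continuous_snd.tendsto _).comp hlim
  have hεl : Tendsto (fun n => ε (φ n)) atTop (𝓝 0) :=
    (tendsto_nhds_of_tendsto_nhdsWithin hε).comp hφ.tendsto_atTop
  have hwl : Tendsto (fun n => w (x (φ n))) atTop (𝓝 (w x₀)) := (hw.tendsto _).comp hxl
  have hv₀0 : v₀ ≠ 0 := by
    rintro rfl
    simp at hv₀
  refine absurd (hin x₀ hx₀ v₀ hv₀0 fun z hz => ?_) (not_lt.2 ?_)
  · have h1 : ⟪v₀, z⟫ ≤ ⟪v₀, x₀⟫ + 0 * ⟪v₀, w x₀⟫ :=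
      le_of_tendsto_of_tendsto' (hvl.inner tendsto_const_nhds)
        ((hvl.inner hxl).add (hεl.mul (hvl.inner hwl))) fun n => (hsep _ z hz).le
    rw [inner_sub_right]
    linarith
  · refine ge_of_tendsto' (hvl.inner hwl) fun n => ?_
    have h1 := hsep (φ n) _ (hBC (hx (φ n)))
    have h2 : 0 < ε (φ n) := (hεB (φ n)).2
    by_contra h3
    nlinarith

/-! ### Convex hulls of compact sets -/

/-- In finite dimension the convex hull of a compact set is compact: by Carathéodory it is the
image of `simplex × K^m` with `m = dim + 1` under a continuous map. -/
theorem isCompact_convexHull_of_isCompact {E : Type*} [NormedAddCommGroup E] [NormedSpace ℝ E]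
    [FiniteDimensional ℝ E] {K : Set E} (hK : IsCompact K) : IsCompact (convexHull ℝ K) := by
  set m := Module.finrank ℝ E + 1
  have himg : convexHull ℝ K = (fun p : (Fin m → ℝ) × (Fin m → E) => ∑ i, p.1 i • p.2 i) ''
      (stdSimplex ℝ (Fin m) ×ˢ Set.univ.pi fun _ => K) := by
    apply Set.Subset.antisymm
    · intro x hx
      obtain ⟨ι, _, z, w, hz, hind, hw, hsum, rfl⟩ := eq_pos_convex_span_of_mem_convexHull hx
      have hcard : Fintype.card ι ≤ m :=
        hind.card_le_finrank_succ.trans (Nat.succ_le_succ (Submodule.finrank_le _))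
      obtain ⟨e⟩ : Nonempty (ι ↪ Fin m) :=
        Function.Embedding.nonempty_of_card_le (by simpa using hcard)
      have hne : Nonempty ι := by
        by_contra h
        rw [not_nonempty_iff] at h
        simp at hsum
      obtain ⟨i₀⟩ := hne
      have hnot : ∀ j, j ∉ Set.range e → Function.extend e w 0 j = 0 := fun j hj => by
        rw [Function.extend_apply' _ _ _ hj]; rfl
      refine ⟨(Function.extend e w 0, Function.extend e z fun _ => z i₀), ⟨⟨fun j => ?_, ?_⟩,
        fun j _ => ?_⟩, ?_⟩
      · by_cases hj : j ∈ Set.range e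
        · obtain ⟨i, rfl⟩ := hj
          simpa [e.injective.extend_apply] using (hw i).le
        · exact (hnot j hj).ge
      · rw [← hsum]
        exact (Fintype.sum_of_injective e e.injective _ _ hnot
          fun i => by simp [e.injective.extend_apply]).symm
      · by_cases hj : j ∈ Set.range e
        · obtain ⟨i, rfl⟩ := hj
          simpa [e.injective.extend_apply] using hz ⟨i, rfl⟩
        · simpa [Function.extend_apply' _ _ _ hj] using hz ⟨i₀, rfl⟩
      · exact (Fintype.sum_of_injective e e.injective _ _
          (fun j hj => by simp [hnot j hj]) fun i => by simp [e.injective.extend_apply]).symm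
    · rintro _ ⟨⟨w, z⟩, ⟨hw, hz⟩, rfl⟩
      exact (convex_convexHull ℝ K).sum_mem (fun i _ => hw.1 i) hw.2
        fun i _ => subset_convexHull ℝ K (hz i trivial)
  rw [himg]
  exact ((isCompact_stdSimplex ℝ (Fin m)).prod (isCompact_univ_pi fun _ => hK)).image
    (by fun_prop)

/-! ### Pairs `(A, a)` as vectors -/

/-- The pair `(u ⊗ v, v)`, encoded as a vector of dimension `d (d + 1)`: the index `(some i, j)`
carries the entry `u i * v j` and the index `(none, j)` carries `v j`. -/
def johnVec {d : ℕ} (u v : EuclideanSpace ℝ (Fin d)) : Option (Fin d) × Fin d → ℝ :=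
  fun p => p.1.elim 1 u * v p.2

/-- The pair `(I, 0)` in the encoding of `johnVec`. -/
def johnTarget (d : ℕ) : Option (Fin d) × Fin d → ℝ :=
  fun p => p.1.elim 0 fun i => (1 : Matrix (Fin d) (Fin d) ℝ) i p.2

/-- The linear functional `(A, a) ↦ tr A - ⟪c, a⟫`. -/
def johnFun {d : ℕ} (c : EuclideanSpace ℝ (Fin d)) : (Option (Fin d) × Fin d → ℝ) →ₗ[ℝ] ℝ :=
  ∑ j, (LinearMap.proj (some j, j) - c j • LinearMap.proj (none, j))

theorem johnFun_johnVec {d : ℕ} (c u v : EuclideanSpace ℝ (Fin d)) :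
    johnFun c (johnVec u v) = ⟪v, u - c⟫ := by
  simp [johnFun, johnVec, PiLp.inner_apply, sub_mul]

theorem johnFun_johnTarget {d : ℕ} (c : EuclideanSpace ℝ (Fin d)) :
    johnFun c (johnTarget d) = d := by
  simp [johnFun, johnTarget]

/-- Every linear functional on pairs `(A, a)` comes from an affine field `x ↦ H x + b`. -/
theorem exists_field_of_functional {d : ℕ} (f : (Option (Fin d) × Fin d → ℝ) →ₗ[ℝ] ℝ) :
    ∃ (H : Matrix (Fin d) (Fin d) ℝ) (b : EuclideanSpace ℝ (Fin d)),
      f (johnTarget d) = H.trace ∧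
      ∀ u v, f (johnVec u v) = ⟪v, Matrix.toEuclideanLin H u + b⟫ := by
  classical
  refine ⟨Matrix.of fun j i => f fun q => if (some i, j) = q then 1 else 0,
    WithLp.toLp 2 fun j => f fun q => if (none, j) = q then 1 else 0, ?_, fun u v => ?_⟩
  · rw [f.pi_apply_eq_sum_univ]
    simp [Fintype.sum_prod_type, Fintype.sum_option, johnTarget, Matrix.trace, Matrix.one_apply]
  · rw [f.pi_apply_eq_sum_univ]
    simp only [Fintype.sum_prod_type, Fintype.sum_option, johnVec, Option.elim_none,
      Option.elim_some, PiLp.inner_apply, PiLp.add_apply, Matrix.toLpLin_apply, Matrix.mulVec,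
      dotProduct, Matrix.of_apply]
    rw [Finset.sum_comm, ← Finset.sum_add_distrib]
    refine Finset.sum_congr rfl fun j _ => ?_
    simp only [smul_eq_mul, one_mul, RCLike.inner_apply, RCLike.conj_to_real, add_mul,
      Finset.sum_mul]
    rw [add_comm, mul_comm (v j)]
    exact congrArg₂ _ (Finset.sum_congr rfl fun i _ => by ring) rfl

/-! ### The determinant and maximality -/

open Filter Topology in
/-- `det (I + ε H) = 1 + ε tr H + O(ε²)`. -/
theorem eventually_one_lt_det {d : ℕ} {H : Matrix (Fin d) (Fin d) ℝ} (hH : 0 < H.trace) :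
    ∀ᶠ ε in 𝓝[>] (0 : ℝ), 1 < (1 + ε • H).det := by
  set q := (1 + (Polynomial.X : Polynomial ℝ) • H.map Polynomial.C).det.divX.divX with hq
  have hc : Continuous fun ε : ℝ => H.trace + q.eval ε * ε := by fun_prop
  have h1 : ∀ᶠ ε in 𝓝 (0 : ℝ), 0 < H.trace + q.eval ε * ε :=
    hc.continuousAt.eventually_const_lt (by simpa using hH)
  filter_upwards [nhdsWithin_le_nhds h1, self_mem_nhdsWithin] with ε h2 h3
  have := mul_pos h2 (Set.mem_Ioi.1 h3)
  rw [Matrix.det_one_add_smul, ← hq]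
  nlinarith

/-- No first-order volume-increasing affine field points strictly inward at all contact points. -/
theorem no_inward_field {d : ℕ} {C B : Set (EuclideanSpace ℝ (Fin d))}
    (hCcpt : IsCompact C) (hCconv : Convex ℝ C) (hBC : B ⊆ C) (hBcpt : IsCompact B)
    (hmax : ∀ (M : Matrix (Fin d) (Fin d) ℝ) (a : EuclideanSpace ℝ (Fin d)),
      (fun x => Matrix.toEuclideanLin M x + a) '' B ⊆ C → |M.det| ≤ 1)
    (H : Matrix (Fin d) (Fin d) ℝ) (b : EuclideanSpace ℝ (Fin d)) (hH : 0 < H.trace)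
    (hin : ∀ u ∈ B, ∀ v : EuclideanSpace ℝ (Fin d), v ≠ 0 → (∀ x ∈ C, ⟪v, x - u⟫ ≤ 0) →
      ⟪v, Matrix.toEuclideanLin H u + b⟫ < 0) : False := by
  have hw : Continuous fun x => Matrix.toEuclideanLin H x + b :=
    (LinearMap.continuous_of_finiteDimensional _).add continuous_const
  obtain ⟨ε, h1, h2⟩ := ((eventually_move_mem hCcpt.isClosed hCconv hBC hBcpt hw hin).and
    (eventually_one_lt_det hH)).exists
  refine absurd (hmax (1 + ε • H) (ε • b) ?_) (not_le.2 (h2.trans_le (le_abs_self _)))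
  rintro _ ⟨x, hx, rfl⟩
  convert h1 x hx using 1
  simp [map_add, map_smul, smul_add, add_assoc]

/-! ### Normal vectors -/

theorem interior_nonempty_of_volume_pos {d : ℕ} {C : Set (EuclideanSpace ℝ (Fin d))}
    (hC : IsClosed C) (hconv : Convex ℝ C) (hpos : 0 < volume C) : (interior C).Nonempty := by
  by_contra h
  rw [Set.not_nonempty_iff_eq_empty] at h
  have h1 := hconv.addHaar_frontier volume
  rw [frontier, hC.closure_eq, h, Set.sdiff_empty] at h1
  exact hpos.ne' h1

theorem mem_frontier_of_normal {E : Type*} [NormedAddCommGroup E] [InnerProductSpace ℝ E]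
    {C : Set E} {u v : E} (hu : u ∈ C) (hv : v ≠ 0) (hn : ∀ x ∈ C, ⟪v, x - u⟫ ≤ 0) :
    u ∈ frontier C := by
  refine ⟨subset_closure hu, fun hi => ?_⟩
  have hc : Continuous fun t : ℝ => u + t • v := by fun_prop
  have h1 : ∀ᶠ t in nhds (0 : ℝ), u + t • v ∈ interior C :=
    hc.continuousAt.eventually_mem (isOpen_interior.mem_nhds (by simpa using hi))
  obtain ⟨t, h2, h3⟩ := ((h1.filter_mono nhdsWithin_le_nhds).and
    (self_mem_nhdsWithin (s := Set.Ioi (0 : ℝ)))).exists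
  have h4 := hn _ (interior_subset h2)
  rw [add_sub_cancel_left, inner_smul_right] at h4
  have h5 : 0 < ⟪v, v⟫ := real_inner_self_pos.2 hv
  have := mul_pos (Set.mem_Ioi.1 h3) h5
  linarith

/-- A normal at `u` pairs with `u - c` to at least `r ‖v‖` when `C` contains the `r`-ball
around `c`. -/
theorem norm_le_inner_of_normal {E : Type*} [NormedAddCommGroup E] [InnerProductSpace ℝ E]
    {C : Set E} {u v c : E} {r : ℝ} (hr : 0 ≤ r) (hball : Metric.closedBall c r ⊆ C)
    (hn : ∀ x ∈ C, ⟪v, x - u⟫ ≤ 0) : r * ‖v‖ ≤ ⟪v, u - c⟫ := by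
  rcases eq_or_ne v 0 with rfl | hv
  · simp
  have hpos : 0 < ‖v‖ := norm_pos_iff.2 hv
  have h1 := hn (c + (r / ‖v‖) • v) (hball (by
    simp [norm_smul, abs_of_nonneg hr, hpos.ne']))
  rw [show c + (r / ‖v‖) • v - u = (r / ‖v‖) • v - (u - c) by abel, inner_sub_right,
    inner_smul_right, real_inner_self_eq_norm_sq] at h1
  have h2 : r / ‖v‖ * ‖v‖ ^ 2 = r * ‖v‖ := by field_simp
  linarith

/-! ### Counting the contact points -/

/-- If `I = ∑ λ u ⊗ v` then the `v`s span, and the relation `∑ λ v = 0` makes them dependent, so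
there are more than `d` of them. -/
theorem succ_le_card_of_decomposition {d : ℕ} (hd : 1 ≤ d) {ι : Type*} [Fintype ι]
    {u v : ι → EuclideanSpace ℝ (Fin d)} {lam : ι → ℝ} (hlam : ∀ k, 0 < lam k)
    (hI : (1 : Matrix (Fin d) (Fin d) ℝ) = ∑ k, lam k • Matrix.vecMulVec (u k) (v k))
    (h0 : (0 : EuclideanSpace ℝ (Fin d)) = ∑ k, lam k • v k) : d + 1 ≤ Fintype.card ι := by
  have hspan : ⊤ ≤ Submodule.span ℝ (Set.range v) := by
    intro x _
    have hx : x = ∑ k, (lam k * ∑ i, x i * u k i) • v k := by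
      ext j
      have h1 : x j = ∑ i, x i * (1 : Matrix (Fin d) (Fin d) ℝ) i j := by
        simp [Matrix.one_apply]
      rw [h1, hI]
      simp only [Matrix.sum_apply, Matrix.smul_apply, Matrix.vecMulVec_apply, WithLp.ofLp_sum,
        Finset.sum_apply, WithLp.ofLp_smul, Pi.smul_apply, smul_eq_mul, Finset.mul_sum,
        Finset.sum_mul]
      rw [Finset.sum_comm]
      refine Finset.sum_congr rfl fun k _ => Finset.sum_congr rfl fun i _ => by ring
    rw [hx]
    exact Submodule.sum_mem _ fun k _ =>
      Submodule.smul_mem _ _ (Submodule.subset_span ⟨k, rfl⟩)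
  have hle : d ≤ Fintype.card ι := by
    have h1 := finrank_range_le_card (R := ℝ) v
    rw [Set.finrank, top_le_iff.1 hspan] at h1
    simpa using h1
  rcases hle.lt_or_eq with h | h
  · exact h
  · have hli : LinearIndependent ℝ v :=
      linearIndependent_of_top_le_span_of_card_eq_finrank hspan (by simpa using h.symm)
    obtain ⟨k⟩ : Nonempty ι := Fintype.card_pos_iff.1 (by omega)
    exact absurd (Fintype.linearIndependent_iff.1 hli lam h0.symm k) (hlam k).ne'

/-- Carathéodory in the hyperplane `φ = t`: affinely independent points there number at most the
dimension of the ambient space. -/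
theorem card_le_finrank_of_hyperplane {E : Type*} [AddCommGroup E] [Module ℝ E]
    [FiniteDimensional ℝ E] {ι : Type*} [Fintype ι] {z : ι → E} (hz : AffineIndependent ℝ z)
    {φ : E →ₗ[ℝ] ℝ} (hφ : φ ≠ 0) {t : ℝ} (ht : ∀ i, φ (z i) = t) :
    Fintype.card ι ≤ Module.finrank ℝ E := by
  have hker : vectorSpan ℝ (Set.range z) ≤ LinearMap.ker φ := by
    rw [vectorSpan, Submodule.span_le]
    rintro _ ⟨_, ⟨i, rfl⟩, _, ⟨j, rfl⟩, rfl⟩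
    simp [ht]
  have h1 : Module.finrank ℝ (LinearMap.ker φ) < Module.finrank ℝ E :=
    Submodule.finrank_lt (by rwa [Ne, LinearMap.ker_eq_top])
  have h2 := hz.card_le_finrank_succ
  have h3 := Submodule.finrank_mono hker
  omega

/-! ### John decomposition -/

theorem john_affine_images (d : ℕ) (hd : 1 ≤ d)
    (C B : Set (EuclideanSpace ℝ (Fin d)))
    (hCcpt : IsCompact C) (hCconv : Convex ℝ C)
    (hBC : B ⊆ C) (hBcpt : IsCompact B) (hBpos : 0 < volume B)
    (hmax : ∀ (M : Matrix (Fin d) (Fin d) ℝ) (a : EuclideanSpace ℝ (Fin d)),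
      (fun x => Matrix.toEuclideanLin M x + a) '' B ⊆ C → |M.det| ≤ 1) :
    ∃ n : ℕ, d + 1 ≤ n ∧ n ≤ d * (d + 1) ∧
      ∃ (u v : Fin n → EuclideanSpace ℝ (Fin d)) (lam : Fin n → ℝ),
        (∀ k, u k ∈ B ∩ frontier C) ∧
        (∀ k, ∀ x ∈ C, ⟪v k, x - u k⟫ ≤ 0) ∧
        (∀ k, 0 < lam k) ∧
        (1 : Matrix (Fin d) (Fin d) ℝ) = ∑ k, lam k • Matrix.vecMulVec (u k) (v k) ∧
        (0 : EuclideanSpace ℝ (Fin d)) = ∑ k, lam k • v k := by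
  have hd0 : (0 : ℝ) < d := by exact_mod_cast hd
  obtain ⟨c, hc⟩ := interior_nonempty_of_volume_pos hCcpt.isClosed hCconv
    (hBpos.trans_le (measure_mono hBC))
  obtain ⟨r, hr, hball⟩ := Metric.nhds_basis_closedBall.mem_iff.1 (mem_interior_iff_mem_nhds.1 hc)
  -- Normals are scaled so that `johnFun c` equals `d` both on the contact pairs and at `(I, 0)`.
  set P : Set (EuclideanSpace ℝ (Fin d) × EuclideanSpace ℝ (Fin d)) :=
    {p | p.1 ∈ B ∧ (∀ x ∈ C, ⟪p.2, x - p.1⟫ ≤ 0) ∧ ⟪p.2, p.1 - c⟫ = d} with hP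
  have hPcpt : IsCompact P := by
    refine (hBcpt.prod (isCompact_closedBall 0 (d / r))).of_isClosed_subset ?_ ?_
    · have h1 : IsClosed {p : EuclideanSpace ℝ (Fin d) × EuclideanSpace ℝ (Fin d) | p.1 ∈ B} :=
        hBcpt.isClosed.preimage continuous_fst
      have h2 : IsClosed {p : EuclideanSpace ℝ (Fin d) × EuclideanSpace ℝ (Fin d) |
          ∀ x ∈ C, ⟪p.2, x - p.1⟫ ≤ 0} := by
        simp only [Set.ofPred_forall]
        exact isClosed_iInter fun x => isClosed_iInter fun _ =>
          isClosed_le (by fun_prop) continuous_const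
      have h3 : IsClosed {p : EuclideanSpace ℝ (Fin d) × EuclideanSpace ℝ (Fin d) |
          ⟪p.2, p.1 - c⟫ = d} := isClosed_eq (by fun_prop) continuous_const
      exact h1.inter (h2.inter h3)
    · rintro ⟨u, v⟩ ⟨hu, hn, hv⟩
      refine ⟨hu, ?_⟩
      have h1 := norm_le_inner_of_normal hr.le hball hn
      rw [mem_closedBall_zero_iff, le_div_iff₀ hr, mul_comm]
      exact h1.trans hv.le
  have hJ : Continuous fun p : EuclideanSpace ℝ (Fin d) × EuclideanSpace ℝ (Fin d) =>
      johnVec p.1 p.2 := by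
    refine continuous_pi fun ⟨o, j⟩ => ?_
    cases o <;> simp only [johnVec, Option.elim_none, Option.elim_some] <;> fun_prop
  set K := (fun p : EuclideanSpace ℝ (Fin d) × EuclideanSpace ℝ (Fin d) =>
    johnVec p.1 p.2) '' P with hK
  have hmem : johnTarget d ∈ convexHull ℝ K := by
    by_contra hnot
    obtain ⟨f, s, hfK, hfT⟩ := geometric_hahn_banach_closed_point (convex_convexHull ℝ K)
      (isCompact_convexHull_of_isCompact (hPcpt.image hJ)).isClosed hnot
    -- Subtracting a multiple of `johnFun c` moves the separating level to `0`.
    obtain ⟨H, b, hT, hf⟩ :=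
      exists_field_of_functional ((f : _ →ₗ[ℝ] ℝ) - (s / d) • johnFun c)
    refine no_inward_field hCcpt hCconv hBC hBcpt hmax H b ?_ fun u hu v hv hn => ?_
    · rw [← hT]
      simp only [LinearMap.sub_apply, LinearMap.smul_apply, johnFun_johnTarget, smul_eq_mul,
        ContinuousLinearMap.coe_coe, div_mul_cancel₀ _ hd0.ne']
      linarith
    · have ht : 0 < ⟪v, u - c⟫ := (mul_pos hr (norm_pos_iff.2 hv)).trans_le
        (norm_le_inner_of_normal hr.le hball hn)
      set a := (d : ℝ) / ⟪v, u - c⟫ with ha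
      have ha0 : 0 < a := div_pos hd0 ht
      have had : ⟪a • v, u - c⟫ = d := by
        rw [real_inner_smul_left, ha, div_mul_cancel₀ _ ht.ne']
      have h1 := hfK _ (subset_convexHull ℝ K ⟨(u, a • v), ⟨hu, fun x hx => by
        rw [real_inner_smul_left]
        exact mul_nonpos_of_nonneg_of_nonpos ha0.le (hn x hx), had⟩, rfl⟩)
      have h2 := hf u (a • v)
      simp only [LinearMap.sub_apply, LinearMap.smul_apply, johnFun_johnVec, had, smul_eq_mul,
        ContinuousLinearMap.coe_coe, div_mul_cancel₀ _ hd0.ne'] at h2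
      rw [real_inner_smul_left] at h2
      by_contra h3
      have := mul_nonneg ha0.le (not_lt.1 h3)
      simp only at h1
      linarith
  obtain ⟨ι, _, z, w, hz, hind, hw, -, hsum⟩ := eq_pos_convex_span_of_mem_convexHull hmem
  have hz' : ∀ i, ∃ p ∈ P, johnVec p.1 p.2 = z i := fun i => hz ⟨i, rfl⟩
  choose p hp hpz using hz'
  have hentry : ∀ q, ∑ i, w i * johnVec (p i).1 (p i).2 q = johnTarget d q := fun q => by
    rw [← hsum, Finset.sum_apply]
    simp [hpz]
  have hI : (1 : Matrix (Fin d) (Fin d) ℝ) =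
      ∑ i, w i • Matrix.vecMulVec (p i).1 (p i).2 := by
    ext i j
    have := hentry (some i, j)
    simp only [johnVec, johnTarget, Option.elim_some] at this
    simp [← this, Matrix.sum_apply, Matrix.vecMulVec_apply]
  have h0 : (0 : EuclideanSpace ℝ (Fin d)) = ∑ i, w i • (p i).2 := by
    ext j
    have := hentry (none, j)
    simp only [johnVec, johnTarget, Option.elim_none] at this
    simpa using this.symm
  have hφ : johnFun c ≠ 0 := fun h => by
    have h1 := johnFun_johnTarget c
    rw [h, LinearMap.zero_apply] at h1
    exact hd0.ne h1
  have hcard : Fintype.card ι ≤ d * (d + 1) := by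
    have := card_le_finrank_of_hyperplane hind hφ (t := d) fun i => by
      rw [← hpz, johnFun_johnVec, (hp i).2.2]
    simpa [mul_comm] using this
  refine ⟨Fintype.card ι, succ_le_card_of_decomposition hd hw hI h0, hcard, ?_⟩
  set e := (Fintype.equivFin ι).symm
  refine ⟨fun k => (p (e k)).1, fun k => (p (e k)).2, fun k => w (e k), fun k => ⟨(hp _).1, ?_⟩,
    fun k => (hp _).2.1, fun k => hw _, ?_, ?_⟩
  · refine mem_frontier_of_normal (hBC (hp _).1) (fun hv => ?_) (hp _).2.1
    have h1 := (hp (e k)).2.2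
    rw [hv, inner_zero_left] at h1
    exact hd0.ne h1
  · rw [hI]
    exact (e.sum_comp fun i => w i • Matrix.vecMulVec (p i).1 (p i).2).symm
  · rw [h0]
    exact (e.sum_comp fun i => w i • (p i).2).symm
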